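/- Let G and H be connected graphs of order n₁ ≥ 2 and n₂ ≥ 2, respectively. If the diameter of H is at most 2, then pd(G⊙H) ≤ pd(G) + pd(H). -/

import Mathlib

/-!
Take minimum resolving partitions `P` of `G` and `Q` of `H`. The corona is partitioned into the
cells `inl '' A` for `A ∈ P` and the cells `V × B` (all copies of `B`) for `B ∈ Q`; there are at
most `pd(G) + pd(H)` of them. Distances to these cells are explicit: from `inl a` to `inl '' A` it
is `d(a, A)`, from `(a, u)` to `inl '' A` it is `d(a, A) + 1`, and, since `H` has diameter at most
`2` while vertices in different copies of `H` are at distance at least `2`, from `(a, u)` to `V × B`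
it is `d(u, B)`. Hence a vertex of `G` is told apart from a vertex of a copy of `H` by its own
cell, two vertices of `G` or of different copies of `H` by the cells coming from `P`, and two
vertices of one copy of `H` by the cells coming from `Q`.
-/

open SimpleGraph

/-- The corona product `G ⊙ H`: one copy of `G`, one copy of `H` for each vertex of `G`,
with the `i`-th vertex of `G` joined to every vertex of the `i`-th copy of `H`. -/
def corona {α β : Type*} (G : SimpleGraph α) (H : SimpleGraph β) :
    SimpleGraph (α ⊕ α × β) :=
  SimpleGraph.fromRel (fun x y =>
    match x, y with
    | Sum.inl a, Sum.inl b => G.Adj a b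
    | Sum.inl a, Sum.inr iu => a = iu.1
    | Sum.inr iu, Sum.inr jw => iu.1 = jw.1 ∧ H.Adj iu.2 jw.2
    | _, _ => False)

/-- The distance from a vertex to a set of vertices: `d(v,A) = min_{u ∈ A} d(v,u)`. -/
noncomputable def setDist {α : Type*} (G : SimpleGraph α) (v : α) (A : Set α) : ℕ :=
  sInf (G.dist v '' A)

/-- `S` is a resolving set for `G`: distinct vertices have distinct metric representations. -/
def IsResolvingSet {α : Type*} (G : SimpleGraph α) (S : Set α) : Prop :=
  ∀ u v : α, (∀ w ∈ S, G.dist u w = G.dist v w) → u = v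

/-- The metric dimension of `G`: minimum cardinality of a resolving set. -/
noncomputable def metricDim {α : Type*} (G : SimpleGraph α) : ℕ :=
  sInf {k | ∃ S : Set α, IsResolvingSet G S ∧ S.ncard = k}

/-- A family of sets is a resolving partition for `G` if it is a partition of the vertex set
into nonempty cells and distinct vertices have distinct partition representations. -/
def IsResolvingPartition {α : Type*} (G : SimpleGraph α) (P : Set (Set α)) : Prop :=
  (∀ A ∈ P, A.Nonempty) ∧ (∀ v : α, ∃! A : Set α, A ∈ P ∧ v ∈ A) ∧
    ∀ u v : α, (∀ A ∈ P, setDist G u A = setDist G v A) → u = v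

/-- The partition dimension of `G`: minimum number of cells in a resolving partition. -/
noncomputable def partitionDim {α : Type*} (G : SimpleGraph α) : ℕ :=
  sInf {t | ∃ P : Set (Set α), IsResolvingPartition G P ∧ P.ncard = t}

/-- `c(H)`: the maximum cardinality of a connected component of `H` which is isomorphic to a
complete graph (i.e. whose vertex set is a clique). -/
noncomputable def maxCompleteComp {β : Type*} (H : SimpleGraph β) : ℕ :=
  sSup {k | ∃ C : H.ConnectedComponent, H.IsClique C.supp ∧ C.supp.ncard = k}

/-- `β(H)`: the number of isolated vertices of `H`. -/
noncomputable def numIsolated {β : Type*} (H : SimpleGraph β) : ℕ :=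
  Set.ncard {v : β | ∀ u, ¬ H.Adj v u}

/-- `α(H)`: the number of connected components of `H` of order greater than one. -/
noncomputable def numBigComp {β : Type*} (H : SimpleGraph β) : ℕ :=
  Set.ncard {C : H.ConnectedComponent | 1 < C.supp.ncard}

/-! ### Distances in the corona -/

section Corona

variable {V W : Type*} {G : SimpleGraph V} {H : SimpleGraph W}

lemma corona_adj_inl_inl {a b : V} :
    (corona G H).Adj (Sum.inl a) (Sum.inl b) ↔ G.Adj a b := by
  simp only [corona, SimpleGraph.fromRel_adj]
  constructor
  · rintro ⟨-, h | h⟩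
    exacts [h, h.symm]
  · intro h
    exact ⟨by simpa using h.ne, Or.inl h⟩

lemma corona_adj_inl_inr {a : V} {p : V × W} :
    (corona G H).Adj (Sum.inl a) (Sum.inr p) ↔ a = p.1 := by
  simp [corona, SimpleGraph.fromRel_adj]

lemma corona_adj_inr_inr {p q : V × W} :
    (corona G H).Adj (Sum.inr p) (Sum.inr q) ↔ p.1 = q.1 ∧ H.Adj p.2 q.2 := by
  simp only [corona, SimpleGraph.fromRel_adj]
  constructor
  · rintro ⟨-, h | h⟩
    exacts [h, ⟨h.1.symm, h.2.symm⟩]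
  · intro h
    refine ⟨?_, Or.inl h⟩
    intro e
    have := Sum.inr_injective e
    subst this
    exact h.2.ne rfl

/-- The copy of `G` inside the corona. -/
def coronaInl (G : SimpleGraph V) (H : SimpleGraph W) : G →g corona G H where
  toFun := Sum.inl
  map_rel' := corona_adj_inl_inl.2

/-- The copy of `H` attached to the vertex `a`. -/
def coronaInr (G : SimpleGraph V) (H : SimpleGraph W) (a : V) : H →g corona G H where
  toFun u := Sum.inr (a, u)
  map_rel' h := corona_adj_inr_inr.2 ⟨rfl, h⟩

lemma corona_connected (hG : G.Connected) : (corona G H).Connected := by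
  have := hG.nonempty
  obtain ⟨a₀⟩ := this
  have key : ∀ x, (corona G H).Reachable (Sum.inl a₀) x := by
    have hl : ∀ a, (corona G H).Reachable (Sum.inl a₀) (Sum.inl a) := fun a =>
      (hG.preconnected a₀ a).map (coronaInl G H)
    rintro (a | ⟨a, u⟩)
    · exact hl a
    · exact (hl a).trans (corona_adj_inl_inr.2 rfl : (corona G H).Adj _ (Sum.inr (a, u))).reachable
  exact { preconnected := fun x y => (key x).symm.trans (key y), nonempty := ⟨Sum.inl a₀⟩ }

lemma dist_map_le {X Y : Type*} {K : SimpleGraph X} {L : SimpleGraph Y} (hK : K.Connected)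
    (f : K →g L) (x y : X) : L.dist (f x) (f y) ≤ K.dist x y := by
  obtain ⟨p, hp⟩ := hK.exists_walk_length_eq_dist x y
  rw [← hp, ← SimpleGraph.Walk.length_map f p]
  exact SimpleGraph.dist_le _

/-- A potential that changes by at most one along edges bounds distances from below. -/
lemma le_add_dist {X : Type*} {K : SimpleGraph X} (hK : K.Connected) (f : X → ℕ)
    (hf : ∀ x y, K.Adj x y → f x ≤ f y + 1) (x y : X) : f x ≤ f y + K.dist x y := by
  obtain ⟨p, hp⟩ := hK.exists_walk_length_eq_dist x y
  rw [← hp]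
  clear hp
  induction p with
  | nil => simp
  | cons h p ih =>
    have := hf _ _ h
    rw [SimpleGraph.Walk.length_cons]
    omega

/-- The distance in the corona from an arbitrary vertex to the vertex `b` of `G`. -/
noncomputable def coronaPotential (G : SimpleGraph V) (b : V) : V ⊕ V × W → ℕ
  | Sum.inl a => G.dist a b
  | Sum.inr p => G.dist p.1 b + 1

lemma coronaPotential_le_dist (hG : G.Connected) (b : V) (x : V ⊕ V × W) :
    coronaPotential G b x ≤ (corona G H).dist x (Sum.inl b) := by
  have h := le_add_dist (corona_connected (H := H) hG) (coronaPotential G b) ?_ x (Sum.inl b)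
  · simpa [coronaPotential] using h
  rintro (a | p) (c | q) hadj
  · have h1 := SimpleGraph.dist_eq_one_iff_adj.2 (corona_adj_inl_inl.1 hadj)
    have h2 := hG.dist_triangle (u := a) (v := c) (w := b)
    simp only [coronaPotential]
    omega
  · have := corona_adj_inl_inr.1 hadj
    subst this
    simp only [coronaPotential]
    omega
  · have := corona_adj_inl_inr.1 hadj.symm
    subst this
    simp only [coronaPotential]
    omega
  · have := (corona_adj_inr_inr.1 hadj).1
    simp only [coronaPotential, this]
    omega

lemma corona_dist_inl_inl (hG : G.Connected) (a b : V) :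
    (corona G H).dist (Sum.inl a) (Sum.inl b) = G.dist a b :=
  le_antisymm (dist_map_le hG (coronaInl G H) a b)
    (coronaPotential_le_dist (H := H) hG b (Sum.inl a))

lemma corona_dist_inr_inl (hG : G.Connected) (p : V × W) (b : V) :
    (corona G H).dist (Sum.inr p) (Sum.inl b) = G.dist p.1 b + 1 := by
  refine le_antisymm ?_ (coronaPotential_le_dist (H := H) hG b (Sum.inr p))
  have h1 := (corona_connected (H := H) hG).dist_triangle
    (u := Sum.inr p) (v := Sum.inl p.1) (w := Sum.inl b)
  have h2 := SimpleGraph.dist_eq_one_iff_adj.2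
    (corona_adj_inl_inr.2 rfl : (corona G H).Adj (Sum.inl p.1) (Sum.inr p)).symm
  rw [corona_dist_inl_inl hG] at h1
  omega

/-- The bound holds across different copies of `H` too: there the distance is at least `2`,
hence at least the diameter of `H`. -/
lemma le_corona_dist_inr_inr (hG : G.Connected) (hH : ∀ u w, H.dist u w ≤ 2) (p q : V × W) :
    H.dist p.2 q.2 ≤ (corona G H).dist (Sum.inr p) (Sum.inr q) := by
  have hd := hH p.2 q.2
  by_contra! hlt
  have h01 : (corona G H).dist (Sum.inr p) (Sum.inr q) = 0 ∨
      (corona G H).dist (Sum.inr p) (Sum.inr q) = 1 := by omega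
  rcases h01 with h | h
  · have := Sum.inr_injective ((corona_connected hG).dist_eq_zero_iff.1 h)
    subst this
    simp at hlt
  · have h' := SimpleGraph.dist_eq_one_iff_adj.2
      (corona_adj_inr_inr.1 (SimpleGraph.dist_eq_one_iff_adj.1 h)).2
    omega

end Corona

/-! ### Distances to cells and the resolving partition of the corona -/

section SetDist

variable {X Y : Type*} {K : SimpleGraph X} {L : SimpleGraph Y}

lemma setDist_le {x : X} {A : Set X} {y : X} (hy : y ∈ A) : setDist K x A ≤ K.dist x y :=
  Nat.sInf_le ⟨y, hy, rfl⟩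

lemma exists_dist_eq_setDist (x : X) {A : Set X} (hA : A.Nonempty) :
    ∃ y ∈ A, K.dist x y = setDist K x A :=
  Nat.sInf_mem (hA.image (K.dist x))

lemma setDist_eq_zero {x : X} {A : Set X} (hx : x ∈ A) : setDist K x A = 0 := by
  have := setDist_le (K := K) (x := x) hx
  simpa using this

variable {V W : Type*} {G : SimpleGraph V} {H : SimpleGraph W}

lemma setDist_corona_inl (hG : G.Connected) (a : V) {A : Set V} (hA : A.Nonempty) :
    setDist (corona G H) (Sum.inl a) (Sum.inl '' A) = setDist G a A := by
  apply le_antisymm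
  · obtain ⟨b, hb, h⟩ := exists_dist_eq_setDist (K := G) a hA
    rw [← h, ← corona_dist_inl_inl (H := H) hG]
    exact setDist_le (Set.mem_image_of_mem _ hb)
  · obtain ⟨_, ⟨b, hb, rfl⟩, h⟩ := exists_dist_eq_setDist (K := corona G H) (Sum.inl a)
      (hA.image Sum.inl)
    rw [← h, corona_dist_inl_inl hG]
    exact setDist_le hb

lemma setDist_corona_inr (hG : G.Connected) (p : V × W) {A : Set V} (hA : A.Nonempty) :
    setDist (corona G H) (Sum.inr p) (Sum.inl '' A) = setDist G p.1 A + 1 := by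
  apply le_antisymm
  · obtain ⟨b, hb, h⟩ := exists_dist_eq_setDist (K := G) p.1 hA
    rw [← h, ← corona_dist_inr_inl (H := H) hG]
    exact setDist_le (Set.mem_image_of_mem _ hb)
  · obtain ⟨_, ⟨b, hb, rfl⟩, h⟩ := exists_dist_eq_setDist (K := corona G H) (Sum.inr p)
      (hA.image Sum.inl)
    rw [← h, corona_dist_inr_inl hG]
    exact Nat.add_le_add_right (setDist_le hb) 1

/-- The union of the copies of `B` over all copies of `H` in the corona. -/
def copies (V : Type*) {W : Type*} (B : Set W) : Set (V ⊕ V × W) :=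
  Sum.inr '' {p : V × W | p.2 ∈ B}

lemma setDist_corona_copies (hG : G.Connected) (hH : H.Connected) (hd : ∀ u w, H.dist u w ≤ 2)
    (p : V × W) {B : Set W} (hB : B.Nonempty) :
    setDist (corona G H) (Sum.inr p) (copies V B) = setDist H p.2 B := by
  apply le_antisymm
  · obtain ⟨w, hw, h⟩ := exists_dist_eq_setDist (K := H) p.2 hB
    rw [← h]
    exact (setDist_le (y := Sum.inr (p.1, w)) (Set.mem_image_of_mem _ hw)).trans
      (dist_map_le hH (coronaInr G H p.1) p.2 w)
  · obtain ⟨w, hw⟩ := hB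
    obtain ⟨_, ⟨q, hq, rfl⟩, h⟩ := exists_dist_eq_setDist (K := corona G H) (Sum.inr p)
      (A := copies V B) ⟨Sum.inr (p.1, w), Set.mem_image_of_mem _ hw⟩
    rw [← h]
    exact (setDist_le (y := q.2) hq).trans (le_corona_dist_inr_inr hG hd p q)

/-- The partition into singletons is resolving, so the minimum defining `partitionDim` is
attained. -/
lemma exists_partitionDim (hK : K.Connected) :
    ∃ P : Set (Set X), IsResolvingPartition K P ∧ P.ncard = partitionDim K := by
  refine Nat.sInf_mem (s := {t | ∃ P : Set (Set X), IsResolvingPartition K P ∧ P.ncard = t})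
    ⟨_, Set.range (fun x : X => ({x} : Set X)), ⟨?_, ?_, ?_⟩, rfl⟩
  · rintro _ ⟨x, rfl⟩
    exact Set.singleton_nonempty x
  · intro v
    refine ⟨{v}, ⟨⟨v, rfl⟩, rfl⟩, ?_⟩
    rintro _ ⟨⟨x, rfl⟩, hx⟩
    rw [Set.mem_singleton_iff.1 hx]
  · intro u v h
    have := h {v} ⟨v, rfl⟩
    simpa [setDist, hK.dist_eq_zero_iff] using this

lemma isResolvingPartition_corona (hG : G.Connected) (hH : H.Connected)
    (hd : ∀ u w, H.dist u w ≤ 2) {P : Set (Set V)} {Q : Set (Set W)}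
    (hP : IsResolvingPartition G P) (hQ : IsResolvingPartition H Q) :
    IsResolvingPartition (corona G H)
      ((fun A : Set V => (Sum.inl '' A : Set (V ⊕ V × W))) '' P ∪ copies V '' Q) := by
  obtain ⟨hP0, hP1, hP2⟩ := hP
  obtain ⟨hQ0, hQ1, hQ2⟩ := hQ
  obtain ⟨a₀⟩ := hG.nonempty
  have hmix : ∀ (a : V) (p : V × W), ∃ A ∈ P,
      setDist (corona G H) (Sum.inl a) (Sum.inl '' A) ≠
        setDist (corona G H) (Sum.inr p) (Sum.inl '' A) := by
    intro a p
    obtain ⟨A, ⟨hA, ha⟩, -⟩ := hP1 a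
    refine ⟨A, hA, ?_⟩
    rw [setDist_corona_inl hG a (hP0 A hA), setDist_corona_inr hG p (hP0 A hA),
      setDist_eq_zero ha]
    omega
  refine ⟨?_, ?_, ?_⟩
  · rintro _ (⟨A, hA, rfl⟩ | ⟨B, hB, rfl⟩)
    · exact (hP0 A hA).image _
    · obtain ⟨w, hw⟩ := hQ0 B hB
      exact ⟨Sum.inr (a₀, w), Set.mem_image_of_mem _ hw⟩
  · rintro (a | p)
    · obtain ⟨A, ⟨hA, ha⟩, hu⟩ := hP1 a
      refine ⟨Sum.inl '' A, ⟨Or.inl ⟨A, hA, rfl⟩, ⟨a, ha, rfl⟩⟩, ?_⟩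
      rintro _ ⟨⟨A', hA', rfl⟩ | ⟨B, hB, rfl⟩, hm⟩
      · obtain ⟨b, hb, hba⟩ := hm
        rw [Sum.inl_injective hba] at hb
        rw [hu A' ⟨hA', hb⟩]
      · obtain ⟨q, hq, h⟩ := hm
        cases h
    · obtain ⟨B, ⟨hB, hb⟩, hu⟩ := hQ1 p.2
      refine ⟨copies V B, ⟨Or.inr ⟨B, hB, rfl⟩, ⟨p, hb, rfl⟩⟩, ?_⟩
      rintro _ ⟨⟨A', hA', rfl⟩ | ⟨B', hB', rfl⟩, hm⟩
      · obtain ⟨q, hq, h⟩ := hm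
        cases h
      · obtain ⟨q, hq, hqp⟩ := hm
        rw [Sum.inr_injective hqp] at hq
        rw [hu B' ⟨hB', hq⟩]
  · rintro (a | p) (b | q) h
    · congr 1
      refine hP2 a b fun A hA => ?_
      have := h _ (Or.inl ⟨A, hA, rfl⟩)
      simpa only [setDist_corona_inl hG _ (hP0 A hA)] using this
    · obtain ⟨A, hA, hne⟩ := hmix a q
      exact absurd (h _ (Or.inl ⟨A, hA, rfl⟩)) hne
    · obtain ⟨A, hA, hne⟩ := hmix b p
      exact absurd (h _ (Or.inl ⟨A, hA, rfl⟩)).symm hne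
    · congr 1
      refine Prod.ext (hP2 _ _ fun A hA => ?_) (hQ2 _ _ fun B hB => ?_)
      · have := h _ (Or.inl ⟨A, hA, rfl⟩)
        simpa only [setDist_corona_inr hG _ (hP0 A hA), Nat.add_right_cancel_iff] using this
      · have := h _ (Or.inr ⟨B, hB, rfl⟩)
        simpa only [setDist_corona_copies hG hH hd _ (hQ0 B hB)] using this

end SetDist

/-- For connected graphs `G` and `H` of orders `n₁ ≥ 2` and `n₂ ≥ 2`, if the
diameter of `H` is at most `2`, then `pd(G⊙H) ≤ pd(G) + pd(H)`. -/
theorem stmt3 {V W : Type*} [Fintype V] [Fintype W] (G : SimpleGraph V) (H : SimpleGraph W)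
    (h₁ : 2 ≤ Fintype.card V) (h₂ : 2 ≤ Fintype.card W)
    (hG : G.Connected) (hH : H.Connected) (hd : H.diam ≤ 2) :
    partitionDim (corona G H) ≤ partitionDim G + partitionDim H := by
  have : Nonempty W := hH.nonempty
  have hdist : ∀ u w, H.dist u w ≤ 2 := fun u w =>
    (SimpleGraph.dist_le_diam (SimpleGraph.connected_iff_ediam_ne_top.1 hH)).trans hd
  obtain ⟨P, hP, hPc⟩ := exists_partitionDim hG
  obtain ⟨Q, hQ, hQc⟩ := exists_partitionDim hH
  rw [← hPc, ← hQc]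
  have hle : partitionDim (corona G H) ≤ _ :=
    Nat.sInf_le ⟨_, isResolvingPartition_corona hG hH hdist hP hQ, rfl⟩
  exact hle.trans <| (Set.ncard_union_le _ _).trans
    (Nat.add_le_add (Set.ncard_image_le P.toFinite) (Set.ncard_image_le Q.toFinite))
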